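/- (Regret-to-suboptimality conversion with approximate maximizers and noisy evaluations; core of the proof of Theorem 3.) Let K ≥ 1 and ε, ε_bp, ε_est ≥ 0. Let μ_1, …, μ_K ∈ P and λ_1, …, λ_K ∈ Λ_B satisfy L(μ, λ_k) ≤ L(μ_k, λ_k) + ε_bp for all μ ∈ P and all k. Let r̂_k, p̂_k ∈ ℝ be estimates with |r̂_k − R_c(μ_k)| ≤ ε_est/(2B) and |p̂_k − R_f(μ_k)| ≤ ε_est/(2B), and define the estimated Lagrangian L̂_k(λ) = R_o(μ_k) + λ^c·(r̂_k − ρ) + λ^f·(p̂_k − (1 − δ)). Suppose the average-regret bound (1/K)·Σ_{k=1}^K L̂_k(λ_k) ≤ inf_{λ ∈ Λ_B} (1/K)·Σ_{k=1}^K L̂_k(λ) + ε holds. Then the averaged policy μ̄ = (1/K)·Σ_{k=1}^K μ_k lies in P and, for every μ ∈ P, inf_{λ ∈ Λ_B} L(μ, λ) ≤ inf_{λ ∈ Λ_B} L(μ̄, λ) + ε + ε_bp + 2·ε_est. -/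

import Mathlib

/-!
Let `λ̄` be the average of the multipliers `λ_k`; it lies in `Λ_B` by convexity. Since `L` is affine in
each argument separately, for all `ν ∈ P` and `l ∈ Λ_B`

`inf_λ L(ν, λ) ≤ L(ν, λ̄) = avg_k L(ν, λ_k) ≤ avg_k L(μ_k, λ_k) + ε_bp ≤ avg_k L̂_k(λ_k) + ε_est/2 + ε_bp`
`≤ avg_k L̂_k(l) + ε + ε_est/2 + ε_bp ≤ avg_k L(μ_k, l) + ε + ε_est + ε_bp = L(μ̄, l) + ε + ε_est + ε_bp`,

and taking the infimum over `l` gives the claim (even with `ε_est` in place of `2 ε_est`). The two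
passages between `L` and `L̂_k` cost `ε_est/2` each, because the multipliers have `ℓ¹`-norm at most `B`.
The real infima are genuine, as functions affine in `l` are bounded below on `Λ_B`.
-/

lemma affine_average {V : Type*} [AddCommGroup V] [Module ℝ V] (f : V →ᵃ[ℝ] ℝ)
    {K : ℕ} (hK : 1 ≤ K) (x : ℕ → V) :
    f ((K : ℝ)⁻¹ • ∑ k ∈ Finset.Icc 1 K, x k) = (K : ℝ)⁻¹ * ∑ k ∈ Finset.Icc 1 K, f (x k) := by
  have hK0 : (K : ℝ) ≠ 0 := by positivity
  have hf : ∀ y, f y = f.linear y + f 0 := fun y => congrFun f.decomp y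
  rw [hf]
  simp only [fun k => hf (x k), Finset.sum_add_distrib, map_smul, map_sum, smul_eq_mul,
    Finset.sum_const, Nat.card_Icc, Nat.add_sub_cancel, nsmul_eq_mul]
  field_simp

lemma convex_average_mem {V : Type*} [AddCommGroup V] [Module ℝ V] {P : Set V}
    (hP : Convex ℝ P) {K : ℕ} (hK : 1 ≤ K) (x : ℕ → V) (hx : ∀ k ∈ Finset.Icc 1 K, x k ∈ P) :
    (K : ℝ)⁻¹ • ∑ k ∈ Finset.Icc 1 K, x k ∈ P := by
  have hK0 : (K : ℝ) ≠ 0 := by positivity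
  rw [Finset.smul_sum]
  refine hP.sum_mem (fun _ _ => by positivity) ?_ hx
  simp [hK0]

lemma average_le_average_add {K : ℕ} (hK : 1 ≤ K) (f g : ℕ → ℝ) (c : ℝ)
    (h : ∀ k ∈ Finset.Icc 1 K, f k ≤ g k + c) :
    (K : ℝ)⁻¹ * ∑ k ∈ Finset.Icc 1 K, f k ≤ (K : ℝ)⁻¹ * ∑ k ∈ Finset.Icc 1 K, g k + c := by
  have hK0 : (K : ℝ) ≠ 0 := by positivity
  calc (K : ℝ)⁻¹ * ∑ k ∈ Finset.Icc 1 K, f k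
      ≤ (K : ℝ)⁻¹ * ∑ k ∈ Finset.Icc 1 K, (g k + c) := by
        gcongr with k hk
        exact h k hk
    _ = (K : ℝ)⁻¹ * ∑ k ∈ Finset.Icc 1 K, g k + c := by
        simp only [Finset.sum_add_distrib, Finset.sum_const, Nat.card_Icc, Nat.add_sub_cancel,
          nsmul_eq_mul]
        field_simp

/-- Perturbing both coefficients by at most `e / (2B)` changes the pairing with a multiplier from
`Λ_B` by at most `e / 2`. -/
lemma abs_pairing_le {B e s t a b : ℝ} (hB : 0 < B) (ha : 0 ≤ a) (hb : 0 ≤ b) (hab : a + b ≤ B)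
    (hs : |s| ≤ e / (2 * B)) (ht : |t| ≤ e / (2 * B)) : |a * s + b * t| ≤ e / 2 := by
  have he : 0 ≤ e / (2 * B) := (abs_nonneg s).trans hs
  calc |a * s + b * t| ≤ a * |s| + b * |t| := by
        simpa [abs_mul, abs_of_nonneg ha, abs_of_nonneg hb] using abs_add_le (a * s) (b * t)
    _ ≤ a * (e / (2 * B)) + b * (e / (2 * B)) := by gcongr
    _ = (a + b) * (e / (2 * B)) := by ring
    _ ≤ B * (e / (2 * B)) := by gcongr
    _ = e / 2 := by field_simp

/-- **Regret-to-suboptimality conversion with approximate maximizers and noisy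
evaluations** (core of the proof of Theorem 3).  If each `μ_k` is an `ε_bp`-approximate
maximizer of `L(·, λ_k)` over `P`, the estimates `r̂_k, p̂_k` are within `ε_est/(2B)` of
the true constraint rewards, and the iterates satisfy the average-regret bound `ε` for
the estimated Lagrangians `L̂_k` over `Λ_B`, then the averaged policy `μ̄ = (1/K) ∑ μ_k`
lies in `P` and is `(ε + ε_bp + 2 ε_est)`-optimal for the bounded sup-inf problem. -/
theorem regret_to_subopt_approx
    {V : Type*} [AddCommGroup V] [Module ℝ V]
    (P : Set V) (hPne : P.Nonempty) (hPconv : Convex ℝ P)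
    (Ro Rc Rf : V →ᵃ[ℝ] ℝ)
    (ρ δ B : ℝ) (hB : 0 < B)
    (L : V → ℝ × ℝ → ℝ)
    (hL : ∀ μ lam, L μ lam = Ro μ + lam.1 * (Rc μ - ρ) + lam.2 * (Rf μ - (1 - δ)))
    (ΛB : Set (ℝ × ℝ))
    (hΛB : ΛB = {lam : ℝ × ℝ | 0 ≤ lam.1 ∧ 0 ≤ lam.2 ∧ lam.1 + lam.2 ≤ B})
    (K : ℕ) (hK : 1 ≤ K) (ε εbp εest : ℝ)
    (hε : 0 ≤ ε) (hεbp : 0 ≤ εbp) (hεest : 0 ≤ εest)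
    (μ : ℕ → V) (lam : ℕ → ℝ × ℝ) (rhat phat : ℕ → ℝ)
    (hμP : ∀ k ∈ Finset.Icc 1 K, μ k ∈ P)
    (hlamB : ∀ k ∈ Finset.Icc 1 K, lam k ∈ ΛB)
    (hμopt : ∀ k ∈ Finset.Icc 1 K, ∀ ν ∈ P, L ν (lam k) ≤ L (μ k) (lam k) + εbp)
    (hrhat : ∀ k ∈ Finset.Icc 1 K, |rhat k - Rc (μ k)| ≤ εest / (2 * B))
    (hphat : ∀ k ∈ Finset.Icc 1 K, |phat k - Rf (μ k)| ≤ εest / (2 * B))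
    -- the estimated Lagrangian `L̂_k(λ) = R_o(μ_k) + λ^c (r̂_k − ρ) + λ^f (p̂_k − (1 − δ))`
    (Lhat : ℕ → ℝ × ℝ → ℝ)
    (hLhat : ∀ k l, Lhat k l = Ro (μ k) + l.1 * (rhat k - ρ) + l.2 * (phat k - (1 - δ)))
    (hregret : (K : ℝ)⁻¹ * ∑ k ∈ Finset.Icc 1 K, Lhat k (lam k) ≤
        (⨅ l : ΛB, (K : ℝ)⁻¹ * ∑ k ∈ Finset.Icc 1 K, Lhat k (l : ℝ × ℝ)) + ε)
    (μbar : V) (hμbar : μbar = (K : ℝ)⁻¹ • ∑ k ∈ Finset.Icc 1 K, μ k) :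
    μbar ∈ P ∧
    ∀ ν ∈ P, (⨅ l : ΛB, L ν (l : ℝ × ℝ)) ≤
      (⨅ l : ΛB, L μbar (l : ℝ × ℝ)) + ε + εbp + 2 * εest := by
  have hmem : ∀ l ∈ ΛB, 0 ≤ l.1 ∧ 0 ≤ l.2 ∧ l.1 + l.2 ≤ B := fun l hl => by
    rw [hΛB] at hl
    exact hl
  have hΛconv : Convex ℝ ΛB := by
    rw [hΛB]
    rintro x ⟨hx1, hx2, hx3⟩ y ⟨hy1, hy2, hy3⟩ a b ha hb hab
    refine ⟨?_, ?_, ?_⟩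
    · simp only [Prod.fst_add, Prod.smul_fst, smul_eq_mul]
      positivity
    · simp only [Prod.snd_add, Prod.smul_snd, smul_eq_mul]
      positivity
    · simp only [Prod.fst_add, Prod.smul_fst, Prod.snd_add, Prod.smul_snd, smul_eq_mul]
      calc a * x.1 + b * y.1 + (a * x.2 + b * y.2)
          = a * (x.1 + x.2) + b * (y.1 + y.2) := by ring
        _ ≤ a * B + b * B := by gcongr
        _ = B := by rw [← add_mul, hab, one_mul]
  have hne : Nonempty ΛB := ⟨⟨lam 1, hlamB 1 (Finset.mem_Icc.mpr ⟨le_rfl, hK⟩)⟩⟩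
  have hbdd : ∀ a b c : ℝ, ∀ l ∈ ΛB, a - B * |b| - B * |c| ≤ a + l.1 * b + l.2 * c := by
    intro a b c l hl
    obtain ⟨h1, h2, h3⟩ := hmem l hl
    have hb : l.1 * -|b| ≤ l.1 * b := mul_le_mul_of_nonneg_left (neg_abs_le b) h1
    have hc : l.2 * -|c| ≤ l.2 * c := mul_le_mul_of_nonneg_left (neg_abs_le c) h2
    have hb' : l.1 * |b| ≤ B * |b| := mul_le_mul_of_nonneg_right (by linarith) (abs_nonneg b)
    have hc' : l.2 * |c| ≤ B * |c| := mul_le_mul_of_nonneg_right (by linarith) (abs_nonneg c)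
    linarith
  have hLbdd : ∀ ν, BddBelow (Set.range fun l : ΛB => L ν (l : ℝ × ℝ)) := by
    rintro ν
    refine ⟨Ro ν - B * |Rc ν - ρ| - B * |Rf ν - (1 - δ)|, ?_⟩
    rintro _ ⟨l, rfl⟩
    simp only [hL]
    exact hbdd _ _ _ l l.2
  have hclose : ∀ k ∈ Finset.Icc 1 K, ∀ l ∈ ΛB, |Lhat k l - L (μ k) l| ≤ εest / 2 := by
    intro k hk l hl
    obtain ⟨h1, h2, h3⟩ := hmem l hl
    have h := abs_pairing_le hB h1 h2 h3 (hrhat k hk) (hphat k hk)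
    rw [hL, hLhat]
    convert h using 2
    ring
  have hLavg_left : ∀ l, L μbar l = (K : ℝ)⁻¹ * ∑ k ∈ Finset.Icc 1 K, L (μ k) l := by
    intro l
    have h := affine_average (Ro + l.1 • (Rc - AffineMap.const ℝ V ρ)
      + l.2 • (Rf - AffineMap.const ℝ V (1 - δ))) hK μ
    rw [← hμbar] at h
    simpa [hL] using h
  have hLavg_right : ∀ ν, L ν ((K : ℝ)⁻¹ • ∑ k ∈ Finset.Icc 1 K, lam k)
      = (K : ℝ)⁻¹ * ∑ k ∈ Finset.Icc 1 K, L ν (lam k) := by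
    intro ν
    have h := affine_average (AffineMap.const ℝ (ℝ × ℝ) (Ro ν)
      + (Rc ν - ρ) • (LinearMap.fst ℝ ℝ ℝ).toAffineMap
      + (Rf ν - (1 - δ)) • (LinearMap.snd ℝ ℝ ℝ).toAffineMap) hK lam
    simp only [AffineMap.coe_add, AffineMap.coe_smul, Pi.add_apply, Pi.smul_apply,
      AffineMap.const_apply, LinearMap.coe_toAffineMap, LinearMap.fst_apply,
      LinearMap.snd_apply, smul_eq_mul] at h
    simp only [hL, mul_comm _ (Rc ν - ρ), mul_comm _ (Rf ν - (1 - δ))]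
    exact h
  -- The averaged estimated Lagrangian stays within `ε_est/2` of `L μbar`, hence is bounded below.
  have hhat_bdd : BddBelow (Set.range fun l : ΛB =>
      (K : ℝ)⁻¹ * ∑ k ∈ Finset.Icc 1 K, Lhat k (l : ℝ × ℝ)) := by
    obtain ⟨m, hm⟩ := hLbdd μbar
    refine ⟨m - εest / 2, ?_⟩
    rintro _ ⟨l, rfl⟩
    have h1 : m ≤ L μbar l := hm ⟨l, rfl⟩
    have h2 := average_le_average_add hK (fun k => L (μ k) l) (fun k => Lhat k l) (εest / 2)
      fun k hk => by
        have := (abs_le.mp (hclose k hk l l.2)).1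
        linarith
    rw [hLavg_left] at h1
    linarith
  refine ⟨hμbar ▸ convex_average_mem hPconv hK μ hμP, fun ν hν => ?_⟩
  have key : ∀ l : ΛB, (⨅ l : ΛB, L ν (l : ℝ × ℝ)) - ε - εbp - 2 * εest ≤ L μbar l := by
    intro l
    have h1 := ciInf_le (hLbdd ν) ⟨_, convex_average_mem hΛconv hK lam hlamB⟩
    rw [hLavg_right] at h1
    have h2 := average_le_average_add hK (fun k => L ν (lam k)) (fun k => Lhat k (lam k))
      (εbp + εest / 2) fun k hk => by
        have := (abs_le.mp (hclose k hk _ (hlamB k hk))).1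
        have := hμopt k hk ν hν
        linarith
    have h3 := ciInf_le hhat_bdd l
    have h4 := average_le_average_add hK (fun k => Lhat k l) (fun k => L (μ k) l) (εest / 2)
      fun k hk => by
        have := (abs_le.mp (hclose k hk l l.2)).2
        linarith
    rw [hLavg_left]
    linarith
  have := le_ciInf key
  linarith
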